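/- Let A be the adjacency matrix of the subgraph of \{0,1\}^n induced by the ball B(n,r), r \le n/2. For each 0 \le t \le r and each \lambda \in 2\mathcal{R}(n-2t, r-t+1) - (n-2t), where \mathcal{R}(m,k) is the set of roots of K_k^{(m)}, \lambda is an eigenvalue of A, and the multiplicity of any eigenvalue \lambda of A is \sum_{t : \lambda \in \Lambda_t} \left(\binom{n}{t} - \binom{n}{t-1}\right), where \Lambda_t = 2\mathcal{R}(n-2t, r-t+1) - (n-2t). Moreover every eigenvalue of A lies in \bigcup_{t=0}^{r} \Lambda_t. -/

import Mathlib

open scoped Classical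

/-- Generalized binomial coefficient `x choose l` as a real number. -/
noncomputable def gchoose (x : ℝ) (l : ℕ) : ℝ :=
  (∏ i ∈ Finset.range l, (x - i)) / (Nat.factorial l)

/-- Krawtchouk polynomial `K_j^{(n)}(x)`. -/
noncomputable def kraw (n j : ℕ) (x : ℝ) : ℝ :=
  ∑ l ∈ Finset.range (j + 1), (-1 : ℝ) ^ l * gchoose x l * gchoose ((n : ℝ) - x) (j - l)

/-- Hamming weight of a Boolean vector. -/
def wt {n : ℕ} (x : Fin n → Bool) : ℕ :=
  (Finset.univ.filter (fun i => x i = true)).card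

/-- Adjacency matrix of the subgraph of the Hamming cube induced by the
Hamming ball of radius `r` around `0`. -/
def ballAdj (n r : ℕ) :
    Matrix {x : Fin n → Bool // wt x ≤ r} {x : Fin n → Bool // wt x ≤ r} ℝ :=
  fun u v => if hammingDist u.1 v.1 = 1 then 1 else 0

/-- The set `Λ_t = 2·R(n-2t, r-t+1) - (n-2t)`, where `R(m,k)` is the set of
roots of the Krawtchouk polynomial `K_k^{(m)}`. -/
def krawLambda (n r t : ℕ) : Set ℝ :=
  {μ : ℝ | ∃ x : ℝ, kraw (n - 2 * t) (r - t + 1) x = 0 ∧ μ = 2 * x - ((n : ℝ) - 2 * t)}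

/-- `binom(n,t) - binom(n,t-1)`, with `binom(n,-1) := 0`. -/
def dimV (n t : ℕ) : ℕ :=
  if t = 0 then 1 else Nat.choose n t - Nat.choose n (t - 1)

/-!
The sum `U + D` of the raising and lowering operators of the Boolean lattice is the adjacency
operator of the cube, and `U`, `D` generate an action of `sl₂`. A lowest weight vector `h` on level
`t` (a *harmonic* function) spans a string `h, U h, U² h, …` of highest weight `n - 2 t`, along
which the equation `(U + D) w = μ w` becomes the Krawtchouk recurrence. Cutting the solution off
after level `r` leaves, inside the ball, only an error on level `r`, proportional to
`K_{r - t + 1}^{(n - 2 t)}(x)` at `x = (μ + (n - 2 t)) / 2`; so the cut-off solution is an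
eigenvector of the ball iff this value vanishes.

There are no other eigenvectors. Peeling off one level at a time shows that every function
satisfying the eigen-equation below level `r` is a sum of cut-off strings, and the errors of the
different strings cannot cancel, because `U` is injective below the middle level. Since a string
starts with `h` itself on level `t`, strings from different levels are independent, so each `t` with
`μ ∈ Λ_t` contributes the dimension `C(n, t) - C(n, t - 1)` of the space of harmonic functions.
-/

namespace HammingBall

open Finset Module PowerSeries
open scoped Matrix

section Krawtchouk

variable {R : Type*} [CommRing R] [BinomialRing R]

theorem succ_mul_choose_succ (x : R) (k : ℕ) :
    (k + 1) * Ring.choose x (k + 1) = (x - k) * Ring.choose x k := by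
  simpa [nsmul_eq_mul, mul_comm] using Ring.choose_smul_choose x k.le_succ

theorem one_add_X_mul_derivative_binomialSeries (y : R) :
    (1 + X) * derivative R (binomialSeries R y) = C y * binomialSeries R y := by
  ext k
  have h := succ_mul_choose_succ y k
  cases k <;>
    simp only [add_mul, one_mul, map_add, coeff_derivative, coeff_zero_X_mul, coeff_succ_X_mul,
      coeff_C_mul, binomialSeries_coeff, smul_eq_mul, mul_one] <;>
    push_cast at h ⊢ <;>
    linear_combination h

theorem one_sub_X_mul_derivative_rescale_binomialSeries (x : R) :
    (1 - X) * derivative R (rescale (-1) (binomialSeries R x)) =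
      -(C x * rescale (-1) (binomialSeries R x)) := by
  ext k
  have h := succ_mul_choose_succ x k
  cases k <;>
    simp only [sub_mul, one_mul, map_sub, map_neg, coeff_derivative, coeff_zero_X_mul,
      coeff_succ_X_mul, coeff_C_mul, coeff_rescale, binomialSeries_coeff, smul_eq_mul,
      mul_one] <;>
    push_cast at h ⊢
  case zero => linear_combination -h
  case succ k => linear_combination (-1) ^ k * h

/-- The power series `(1 - X) ^ x * (1 + X) ^ y`. For `x + y = m` its coefficients are the values
at `x` of the Krawtchouk polynomials for dimension `m`. -/
noncomputable def krawGenFun (x y : R) : PowerSeries R :=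
  rescale (-1) (binomialSeries R x) * binomialSeries R y

theorem derivative_krawGenFun (x y : R) :
    derivative R (krawGenFun x y) =
      X * (X * derivative R (krawGenFun x y)) + C (y - x) * krawGenFun x y -
        C (x + y) * (X * krawGenFun x y) := by
  rw [krawGenFun, Derivation.leibniz, smul_eq_mul, smul_eq_mul, map_sub, map_add]
  linear_combination
    (1 + X) * binomialSeries R y * one_sub_X_mul_derivative_rescale_binomialSeries x +
      (1 - X) * rescale (-1) (binomialSeries R x) * one_add_X_mul_derivative_binomialSeries y

theorem choose_eq_gchoose (x : ℝ) (l : ℕ) : Ring.choose x l = gchoose x l := by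
  rw [Ring.choose_eq_smul, ← Polynomial.aeval_eq_smeval, Polynomial.aeval_def,
    ← Polynomial.eval_map, descPochhammer_map, descPochhammer_eval_eq_prod_range, smul_eq_mul,
    inv_mul_eq_div, gchoose]

theorem kraw_eq_coeff_krawGenFun (m k : ℕ) (x : ℝ) :
    kraw m k x = coeff k (krawGenFun x (m - x)) := by
  simp [kraw, krawGenFun, coeff_mul, Nat.sum_antidiagonal_eq_sum_range_succ_mk,
    choose_eq_gchoose]

theorem kraw_zero (m : ℕ) (x : ℝ) : kraw m 0 x = 1 := by
  simp [kraw, gchoose]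

theorem kraw_one (m : ℕ) (x : ℝ) : kraw m 1 x = m - 2 * x := by
  simp only [kraw, gchoose, sum_range_succ, range_zero, sum_empty, prod_range_succ,
    Nat.factorial, Nat.sub_zero, Nat.sub_self]
  push_cast
  ring

theorem kraw_recurrence (m k : ℕ) (x : ℝ) :
    (k + 2) * kraw m (k + 2) x = (m - 2 * x) * kraw m (k + 1) x - (m - k) * kraw m k x := by
  have h := congrArg (coeff (k + 1)) (derivative_krawGenFun x (m - x))
  simp only [map_add (coeff (k + 1)), map_sub (coeff (k + 1)), coeff_C_mul, coeff_succ_X_mul,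
    coeff_derivative] at h
  cases k <;>
    simp only [coeff_zero_X_mul, coeff_succ_X_mul, coeff_derivative,
      ← kraw_eq_coeff_krawGenFun] at h <;>
    push_cast at h ⊢ <;>
    linear_combination h

/-- The Krawtchouk polynomials with alternating signs, in the eigenvalue variable `μ = 2 x - m`:
`krawSeq m μ j` is `(-1) ^ j * K_j^{(m)}(x)`. -/
noncomputable def krawSeq (m : ℕ) (μ : ℝ) (j : ℕ) : ℝ :=
  (-1) ^ j * kraw m j ((μ + m) / 2)

theorem krawSeq_zero (m : ℕ) (μ : ℝ) : krawSeq m μ 0 = 1 := by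
  simp [krawSeq, kraw_zero]

theorem krawSeq_one (m : ℕ) (μ : ℝ) : krawSeq m μ 1 = μ := by
  rw [krawSeq, kraw_one]
  ring

theorem krawSeq_recurrence (m : ℕ) (μ : ℝ) (j : ℕ) :
    (j + 2) * krawSeq m μ (j + 2) = μ * krawSeq m μ (j + 1) - (m - j) * krawSeq m μ j := by
  have h := kraw_recurrence m j ((μ + m) / 2)
  simp only [krawSeq]
  linear_combination (-1) ^ j * h

theorem mem_krawLambda_iff {n t : ℕ} (ht : 2 * t ≤ n) (r : ℕ) (μ : ℝ) :
    μ ∈ krawLambda n r t ↔ krawSeq (n - 2 * t) μ (r - t + 1) = 0 := by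
  have hcast : ((n - 2 * t : ℕ) : ℝ) = n - 2 * t := by
    rw [Nat.cast_sub ht, Nat.cast_mul, Nat.cast_ofNat]
  simp only [krawSeq, mul_eq_zero, pow_eq_zero_iff', neg_eq_zero, one_ne_zero, false_and, false_or,
    hcast]
  constructor
  · rintro ⟨x, hx, rfl⟩
    convert hx using 2
    ring
  · exact fun h => ⟨_, h, by ring⟩

end Krawtchouk

section Level

variable (R α : Type*) [CommRing R] [Fintype α]

/-- The functions supported on the `i`-th level of the Boolean lattice. -/
noncomputable def level (i : ℕ) : Submodule R (Finset α → R) :=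
  Pi.spanSubset R {S | #S = i}

variable {R α}

theorem mem_level {f : Finset α → R} {i : ℕ} : f ∈ level R α i ↔ ∀ S, #S ≠ i → f S = 0 :=
  Pi.mem_spanSubset_iff

theorem finrank_level [Nontrivial R] (i : ℕ) :
    finrank R (level R α i) = (Fintype.card α).choose i := by
  have hcoe : {S : Finset α | #S = i} = powersetCard i (univ : Finset α) := by
    ext
    simp
  rw [level, Pi.dim_spanSubset, hcoe, Set.ncard_coe_finset, card_powersetCard, card_univ]

end Level

section Operators

variable (R α : Type*) [CommRing R] [DecidableEq α]

/-- The raising operator of the Boolean lattice: the sum of `f` over the lower covers of a set. -/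
def raising : Module.End R (Finset α → R) where
  toFun f S := ∑ i ∈ S, f (S.erase i)
  map_add' f g := by ext S; simp [sum_add_distrib]
  map_smul' c f := by ext S; simp [mul_sum]

variable {R α} in
theorem raising_apply (f : Finset α → R) (S : Finset α) :
    raising R α f S = ∑ i ∈ S, f (S.erase i) := rfl

variable [Fintype α]

/-- The lowering operator of the Boolean lattice: the sum of `f` over the upper covers of a set. -/
def lowering : Module.End R (Finset α → R) where
  toFun f S := ∑ i ∈ Sᶜ, f (insert i S)
  map_add' f g := by ext S; simp [sum_add_distrib]
  map_smul' c f := by ext S; simp [mul_sum]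

variable {R α} in
theorem lowering_apply (f : Finset α → R) (S : Finset α) :
    lowering R α f S = ∑ i ∈ Sᶜ, f (insert i S) := rfl

/-- The functions on level `t` killed by the lowering operator: the lowest weight vectors for the
`sl₂`-action given by `raising` and `lowering`. -/
noncomputable def harmonic (t : ℕ) : Submodule R (Finset α → R) :=
  level R α t ⊓ (lowering R α).ker

variable {R α} {f : Finset α → R} {i : ℕ}

theorem mem_harmonic : f ∈ harmonic R α i ↔ f ∈ level R α i ∧ lowering R α f = 0 := Iff.rfl

theorem raising_dotProduct (f g : Finset α → R) :
    raising R α f ⬝ᵥ g = f ⬝ᵥ lowering R α g := by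
  simp only [dotProduct, raising_apply, lowering_apply, sum_mul, mul_sum]
  rw [sum_sigma', sum_sigma']
  refine sum_bij' (fun p _ => ⟨p.1.erase p.2, p.2⟩) (fun p _ => ⟨insert p.2 p.1, p.2⟩)
    ?_ ?_ ?_ ?_ ?_ <;> rintro ⟨S, i⟩ h <;>
    simp only [mem_sigma, mem_univ, true_and, mem_compl] at h <;> simp [h]

theorem lowering_raising_apply (f : Finset α → R) (S : Finset α) :
    lowering R α (raising R α f) S =
      raising R α (lowering R α f) S + (Fintype.card α - 2 * #S) * f S := by
  have hDU : lowering R α (raising R α f) S =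
      ∑ i ∈ Sᶜ, (f S + ∑ j ∈ S, f ((insert i S).erase j)) := by
    refine sum_congr rfl fun i hi => ?_
    have hi := mem_compl.mp hi
    rw [raising_apply, sum_insert hi, erase_insert hi]
  have hUD : raising R α (lowering R α f) S =
      ∑ j ∈ S, (f S + ∑ i ∈ Sᶜ, f ((insert i S).erase j)) := by
    refine sum_congr rfl fun j hj => ?_
    rw [lowering_apply, compl_erase, sum_insert (by simpa using hj), insert_erase hj]
    congr 1
    refine sum_congr rfl fun i hi => ?_
    rw [erase_insert_of_ne (by rintro rfl; exact mem_compl.mp hi hj)]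
  rw [hDU, hUD, sum_add_distrib, sum_add_distrib, sum_comm, sum_const, sum_const, card_compl,
    nsmul_eq_mul, nsmul_eq_mul, Nat.cast_sub (card_le_univ S)]
  ring

theorem lowering_raising_of_mem_level (hf : f ∈ level R α i) :
    lowering R α (raising R α f) =
      raising R α (lowering R α f) + ((Fintype.card α : R) - 2 * i) • f := by
  ext S
  rw [lowering_raising_apply, Pi.add_apply, Pi.smul_apply, smul_eq_mul]
  by_cases hS : #S = i
  · rw [hS]
  · rw [mem_level.mp hf S hS, mul_zero, mul_zero]

theorem raising_mem_level (hf : f ∈ level R α i) : raising R α f ∈ level R α (i + 1) := by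
  refine mem_level.mpr fun S hS => sum_eq_zero fun j hj => mem_level.mp hf _ ?_
  have := card_erase_add_one hj
  omega

theorem raising_pow_mem_level (hf : f ∈ level R α i) (j : ℕ) :
    (raising R α ^ j) f ∈ level R α (i + j) := by
  induction j with
  | zero => exact hf
  | succ j ih => rw [pow_succ']; exact raising_mem_level ih

theorem lowering_mem_level (hf : f ∈ level R α (i + 1)) : lowering R α f ∈ level R α i := by
  refine mem_level.mpr fun S hS => sum_eq_zero fun j hj => mem_level.mp hf _ ?_
  rw [card_insert_of_notMem (mem_compl.mp hj)]
  omega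

theorem harmonic_zero : harmonic R α 0 = level R α 0 := by
  refine inf_eq_left.mpr fun f hf => ?_
  ext S
  exact sum_eq_zero fun j _ => mem_level.mp hf _ (by simp)

theorem lowering_raising_pow_succ (hf : f ∈ harmonic R α i) (j : ℕ) :
    lowering R α ((raising R α ^ (j + 1)) f) =
      ((j + 1) * ((Fintype.card α : R) - 2 * i - j)) • (raising R α ^ j) f := by
  obtain ⟨hlevel, hker⟩ := mem_harmonic.mp hf
  induction j with
  | zero => simp [lowering_raising_of_mem_level hlevel, hker]
  | succ j ih =>
    rw [pow_succ' _ (j + 1), Module.End.mul_apply,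
      lowering_raising_of_mem_level (raising_pow_mem_level hlevel (j + 1)), ih, map_smul,
      ← Module.End.mul_apply, ← pow_succ', ← add_smul]
    congr 1
    push_cast
    ring

theorem raising_dotProduct_raising (hf : f ∈ level R α i) :
    raising R α f ⬝ᵥ raising R α f =
      lowering R α f ⬝ᵥ lowering R α f + (Fintype.card α - 2 * i) * (f ⬝ᵥ f) := by
  rw [raising_dotProduct, lowering_raising_of_mem_level hf, dotProduct_add, dotProduct_smul,
    dotProduct_comm, raising_dotProduct, smul_eq_mul]

end Operators

section Injectivity

variable {R α : Type*} [CommRing R] [LinearOrder R] [IsStrictOrderedRing R] [Fintype α]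
  [DecidableEq α] {i r : ℕ}

theorem eq_zero_of_raising_eq_zero {f : Finset α → R} (hi : 2 * i < Fintype.card α)
    (hf : f ∈ level R α i) (h : raising R α f = 0) : f = 0 := by
  have hnorm := raising_dotProduct_raising hf
  rw [h, dotProduct_zero] at hnorm
  have hpos : (0 : R) < Fintype.card α - 2 * i := by
    rw [sub_pos]; exact_mod_cast hi
  have hD : 0 ≤ lowering R α f ⬝ᵥ lowering R α f := sum_nonneg fun _ _ => mul_self_nonneg _
  have hff : 0 ≤ f ⬝ᵥ f := sum_nonneg fun _ _ => mul_self_nonneg _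
  refine dotProduct_self_eq_zero.mp (hff.antisymm' ?_)
  nlinarith

theorem eq_zero_of_lowering_raising_eq_zero {f : Finset α → R} (hi : 2 * i < Fintype.card α)
    (hf : f ∈ level R α i) (h : lowering R α (raising R α f) = 0) : f = 0 := by
  refine eq_zero_of_raising_eq_zero hi hf (dotProduct_self_eq_zero.mp ?_)
  rw [raising_dotProduct, h, dotProduct_zero]

theorem eq_zero_of_sum_raising_pow_eq_zero {h : ℕ → Finset α → R} (hr : 2 * r ≤ Fintype.card α)
    (hh : ∀ t, h t ∈ harmonic R α t)
    (hsum : ∑ t ∈ range (r + 1), (raising R α ^ (r - t)) (h t) = 0) : ∀ t ≤ r, h t = 0 := by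
  induction r with
  | zero => simpa using hsum
  | succ r ih =>
    set f := ∑ t ∈ range (r + 1), (raising R α ^ (r - t)) (h t)
    have hf : f ∈ level R α r := Submodule.sum_mem _ fun t ht => by
      have := raising_pow_mem_level (hh t).1 (r - t)
      rwa [Nat.add_sub_cancel' (by simpa [Nat.lt_succ_iff] using ht)] at this
    have hUf : ∑ t ∈ range (r + 1), (raising R α ^ (r + 1 - t)) (h t) = raising R α f := by
      rw [map_sum]
      refine sum_congr rfl fun t ht => ?_
      rw [Nat.sub_add_comm (by simpa [Nat.lt_succ_iff] using ht), pow_succ', Module.End.mul_apply]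
    rw [sum_range_succ, hUf, Nat.sub_self, pow_zero, Module.End.one_apply] at hsum
    have hf0 : f = 0 := by
      refine eq_zero_of_lowering_raising_eq_zero (by omega) hf ?_
      simpa [(mem_harmonic.mp (hh (r + 1))).2] using congrArg (lowering R α) hsum
    have hlast : h (r + 1) = 0 := by simpa [hf0] using hsum
    intro t ht
    obtain rfl | ht := ht.eq_or_lt
    exacts [hlast, ih (by omega) hf0 t (Nat.lt_succ_iff.mp ht)]

end Injectivity

section Dimension

theorem dimV_pos {n t : ℕ} (ht : 2 * t ≤ n) : 0 < dimV n t := by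
  cases t with
  | zero => simp [dimV]
  | succ t =>
    rw [dimV, if_neg t.succ_ne_zero, Nat.add_sub_cancel, tsub_pos_iff_lt]
    refine lt_of_mul_lt_mul_right ?_ (t + 1).zero_le
    rw [Nat.choose_succ_right_eq]
    exact Nat.mul_lt_mul_of_pos_left (by omega) (Nat.choose_pos (by omega))

variable {K α : Type*} [Field K] [LinearOrder K] [IsStrictOrderedRing K] [Fintype α]
  [DecidableEq α]

theorem map_lowering_level_succ {i : ℕ} (hi : 2 * i < Fintype.card α) :
    (level K α (i + 1)).map (lowering K α) = level K α i := by
  refine le_antisymm (Submodule.map_le_iff_le_comap.mpr fun f hf => lowering_mem_level hf)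
    fun f hf => ?_
  let DU : End K (level K α i) := (lowering K α * raising K α).restrict
    fun f hf => lowering_mem_level (raising_mem_level hf)
  have hinj : Function.Injective DU := (injective_iff_map_eq_zero DU).mpr fun g hg =>
    Subtype.ext (eq_zero_of_lowering_raising_eq_zero hi g.2 (congrArg Subtype.val hg))
  obtain ⟨g, hg⟩ := LinearMap.injective_iff_surjective.mp hinj ⟨f, hf⟩
  exact ⟨_, raising_mem_level g.2, congrArg Subtype.val hg⟩

theorem finrank_harmonic {t : ℕ} (ht : 2 * t ≤ Fintype.card α) :
    finrank K (harmonic K α t) = dimV (Fintype.card α) t := by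
  cases t with
  | zero => rw [harmonic_zero, finrank_level, Nat.choose_zero_right, dimV, if_pos rfl]
  | succ t =>
    have h := LinearMap.finrank_range_add_finrank_ker
      ((lowering K α).domRestrict (level K α (t + 1)))
    rw [LinearMap.range_domRestrict, map_lowering_level_succ (by omega), LinearMap.ker_domRestrict,
      ← Submodule.finrank_map_subtype_eq, Submodule.map_comap_subtype, finrank_level,
      finrank_level] at h
    rw [dimV, if_neg t.succ_ne_zero, harmonic]
    exact Nat.eq_sub_of_add_eq' h

end Dimension

section Strings

variable {M : Type*} [AddCommGroup M] [Module ℝ M]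

/-- The solution of `(U + D) w = μ w` along an `sl₂`-string `v, U v, U² v, …` of highest weight
`m` with `D v = 0`, normalized by `w = v + ⋯` and cut off after `U ^ k v`. -/
noncomputable def krawString (U : End ℝ M) (m k : ℕ) (μ : ℝ) : End ℝ M :=
  ∑ j ∈ range (k + 1), (krawSeq m μ j / m.descFactorial j) • U ^ j

theorem krawString_apply (U : End ℝ M) (m k : ℕ) (μ : ℝ) (v : M) :
    krawString U m k μ v =
      ∑ j ∈ range (k + 1), (krawSeq m μ j / m.descFactorial j) • (U ^ j) v := by
  simp [krawString]

theorem krawString_residual {U D : End ℝ M} {v : M} {m k : ℕ} (hk : k ≤ m) (hv : D v = 0)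
    (hD : ∀ j : ℕ, D ((U ^ (j + 1)) v) = ((j + 1) * ((m : ℝ) - j)) • (U ^ j) v) (μ : ℝ) :
    (U + D - algebraMap ℝ (End ℝ M) μ) (krawString U m k μ v) =
      (krawSeq m μ k / m.descFactorial k) • (U ^ (k + 1)) v -
        ((k + 1) * krawSeq m μ (k + 1) / m.descFactorial k) • (U ^ k) v := by
  induction k with
  | zero => simp [krawString, krawSeq_zero, krawSeq_one, hv]
  | succ k ih =>
    have hne : (m.descFactorial k : ℝ) ≠ 0 := by
      exact_mod_cast (Nat.descFactorial_pos.mpr (by omega)).ne'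
    have hmk : (m : ℝ) - k ≠ 0 := sub_ne_zero.mpr (by exact_mod_cast (show m ≠ k by omega))
    have hdesc : (m.descFactorial (k + 1) : ℝ) = (m - k) * m.descFactorial k := by
      rw [Nat.descFactorial_succ, Nat.cast_mul, Nat.cast_sub (by omega)]
    have hsucc : krawString U m (k + 1) μ v = krawString U m k μ v +
        (krawSeq m μ (k + 1) / m.descFactorial (k + 1)) • (U ^ (k + 1)) v := by
      rw [krawString_apply, krawString_apply, sum_range_succ]
    have hU : U ((U ^ (k + 1)) v) = (U ^ (k + 1 + 1)) v := by
      rw [pow_succ' U (k + 1), End.mul_apply]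
    have hcoeff_k : krawSeq m μ (k + 1) / m.descFactorial (k + 1) * ((k + 1) * (m - k)) =
        (k + 1) * krawSeq m μ (k + 1) / m.descFactorial k := by
      rw [hdesc]
      field_simp
    have hcoeff_succ : krawSeq m μ k / m.descFactorial k -
          μ * (krawSeq m μ (k + 1) / m.descFactorial (k + 1)) =
        -(((k + 1 : ℕ) + 1) * krawSeq m μ (k + 1 + 1) / m.descFactorial (k + 1)) := by
      rw [hdesc]
      field_simp
      push_cast
      linear_combination krawSeq_recurrence m μ k
    rw [hsucc, map_add, ih (by omega), map_smul]
    simp only [LinearMap.sub_apply, LinearMap.add_apply, hU, hD, algebraMap_end_apply]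
    linear_combination (norm := module)
      hcoeff_k • (U ^ k) v + hcoeff_succ • (U ^ (k + 1)) v

end Strings

section Compression

variable {R X : Type*} [CommRing R] [Fintype X]

/-- The functions supported on `s` that satisfy the equation `A f = μ f` at the points of `t`. For
`s = t` these are the eigenvectors of the compression of `A` to `s`. -/
noncomputable def partialEigenspace (A : End R (X → R)) (s t : Set X) (μ : R) :
    Submodule R (X → R) :=
  Pi.spanSubset R s ⊓ (Pi.spanSubset R tᶜ).comap (A - algebraMap R (End R (X → R)) μ)

theorem mem_partialEigenspace {A : End R (X → R)} {s t : Set X} {μ : R} {f : X → R} :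
    f ∈ partialEigenspace A s t μ ↔ (∀ x ∉ s, f x = 0) ∧ ∀ x ∈ t, A f x = μ * f x := by
  simp [partialEigenspace, Pi.mem_spanSubset_iff, sub_eq_zero]

theorem map_extendByZero_eigenspace_submatrix {ι : Type*} [Fintype ι] [DecidableEq ι]
    [DecidableEq X] (M : Matrix X X R) {e : ι → X} (he : Function.Injective e) (μ : R) :
    (End.eigenspace (Matrix.toLin' (M.submatrix e e)) μ).map (Function.ExtendByZero.linearMap R e) =
      partialEigenspace (Matrix.toLin' M) (Set.range e) (Set.range e) μ := by
  have hmulVec (g : ι → R) (i : ι) :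
      (M *ᵥ Function.extend e g 0) (e i) = (M.submatrix e e *ᵥ g) i := by
    refine (Fintype.sum_of_injective e he _ _ (fun x hx => ?_) fun j => ?_).symm
    · rw [Function.extend_apply' _ _ _ hx, Pi.zero_apply, mul_zero]
    · simp only [Matrix.submatrix_apply, he.extend_apply]
  ext f
  rw [mem_partialEigenspace, Submodule.mem_map]
  constructor
  · rintro ⟨g, hg, rfl⟩
    refine ⟨fun x hx => Function.extend_apply' _ _ _ hx, Set.forall_mem_range.mpr fun i => ?_⟩
    have := congrFun (End.mem_eigenspace_iff.mp hg) i
    change (M *ᵥ Function.extend e g 0) (e i) = μ * Function.extend e g 0 (e i)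
    rwa [hmulVec, he.extend_apply]
  · rintro ⟨hsupp, heq⟩
    have hf : Function.extend e (f ∘ e) 0 = f := by
      ext x
      by_cases hx : x ∈ Set.range e
      · obtain ⟨i, rfl⟩ := hx
        rw [he.extend_apply, Function.comp_apply]
      · rw [Function.extend_apply' _ _ _ hx, hsupp x hx, Pi.zero_apply]
    refine ⟨f ∘ e, End.mem_eigenspace_iff.mpr (funext fun i => ?_), hf⟩
    rw [Matrix.toLin'_apply, ← hmulVec, hf]
    exact heq _ (Set.mem_range_self i)

theorem finrank_eigenspace_submatrix {ι : Type*} [Fintype ι] [DecidableEq ι]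
    [DecidableEq X] (M : Matrix X X R) {e : ι → X} (he : Function.Injective e) (μ : R) :
    finrank R (End.eigenspace (Matrix.toLin' (M.submatrix e e)) μ) =
      finrank R (partialEigenspace (Matrix.toLin' M) (Set.range e) (Set.range e) μ) := by
  have hinj : Function.Injective (Function.ExtendByZero.linearMap R e) :=
    Function.extend_injective he (0 : X → R)
  rw [← map_extendByZero_eigenspace_submatrix M he,
    (Submodule.equivMapOfInjective _ hinj _).finrank_eq]

end Compression

section FiniteDimensional

variable {ι K V W : Type*} [Field K] [AddCommGroup V] [Module K V] [FiniteDimensional K V]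
  [AddCommGroup W] [Module K W]

theorem finrank_iSup_map {s : Finset ι} {p : ι → Submodule K V} {f : ι → V →ₗ[K] W}
    (hf : ∀ v : ι → V, (∀ i ∈ s, v i ∈ p i) → ∑ i ∈ s, f i (v i) = 0 → ∀ i ∈ s, v i = 0) :
    finrank K ↥(⨆ i ∈ s, (p i).map (f i)) = ∑ i ∈ s, finrank K (p i) := by
  classical
  let Φ := LinearMap.lsum K (fun i : s => p i) K fun i => f i ∘ₗ (p i).subtype
  have hΦ (v : ∀ i : s, p i) : Φ v = ∑ i : s, f i (v i) := by simp [Φ]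
  have hinj : Function.Injective Φ := (injective_iff_map_eq_zero Φ).mpr fun v hv => by
    let w (i : ι) : V := if hi : i ∈ s then v ⟨i, hi⟩ else 0
    have hw (i : s) : w i = v i := dif_pos i.2
    have := hf w (fun i hi => (hw ⟨i, hi⟩) ▸ (v ⟨i, hi⟩).2) (by
      rw [← sum_coe_sort s, ← hv, hΦ]
      simp only [hw])
    exact funext fun i => Subtype.ext ((hw i).symm.trans (this i i.2))
  have hrange : Φ.range = ⨆ i ∈ s, (p i).map (f i) := by
    refine le_antisymm ?_ (iSup₂_le fun i hi => ?_)
    · rintro _ ⟨v, rfl⟩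
      rw [hΦ]
      exact Submodule.sum_mem _ fun i _ =>
        Submodule.mem_iSup_of_mem i (Submodule.mem_iSup_of_mem i.2 ⟨_, (v i).2, rfl⟩)
    · rintro _ ⟨x, hx, rfl⟩
      exact ⟨Pi.single ⟨i, hi⟩ ⟨x, hx⟩, LinearMap.lsum_piSingle ..⟩
  rw [← hrange, LinearMap.finrank_range_of_inj hinj, finrank_pi_fintype,
    sum_coe_sort s fun i => finrank K (p i)]

end FiniteDimensional

section Ball

variable {α : Type*} [Fintype α] [DecidableEq α] {r t : ℕ} {μ : ℝ} {f h : Finset α → ℝ}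
  {S : Finset α}

variable (α) in
/-- The string grown from level `t` and cut off at level `r`. -/
noncomputable def ballString (r : ℕ) (μ : ℝ) (t : ℕ) : End ℝ (Finset α → ℝ) :=
  krawString (raising ℝ α) (Fintype.card α - 2 * t) (r - t) μ

theorem ballString_apply_of_card_le (hh : h ∈ level ℝ α t) (hS : #S ≤ t) :
    ballString α r μ t h S = h S := by
  rw [ballString, krawString_apply, sum_range_succ', Pi.add_apply, Finset.sum_apply]
  have htail (j : ℕ) : (raising ℝ α ^ (j + 1)) h S = 0 :=
    mem_level.mp (raising_pow_mem_level hh (j + 1)) S (by omega)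
  simp [htail, krawSeq_zero]

theorem ballString_apply_of_lt_card (hh : h ∈ level ℝ α t) (ht : t ≤ r) (hS : r < #S) :
    ballString α r μ t h S = 0 := by
  rw [ballString, krawString_apply, Finset.sum_apply]
  refine sum_eq_zero fun j hj => ?_
  have := mem_range.mp hj
  rw [Pi.smul_apply, mem_level.mp (raising_pow_mem_level hh j) S (by omega), smul_zero]

/-- The defect of the eigen-equation `(raising + lowering) w = μ w` on level `r` for
`w = ballString α r μ t h` is `-ballDefect n r μ t • (raising ^ (r - t)) h`, where `n` is the
cardinality of `α`. -/
noncomputable def ballDefect (n r : ℕ) (μ : ℝ) (t : ℕ) : ℝ :=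
  ((r - t : ℕ) + 1) * krawSeq (n - 2 * t) μ (r - t + 1) / (n - 2 * t).descFactorial (r - t)

theorem ballDefect_eq_zero_iff {n : ℕ} (hr : 2 * r ≤ n) (ht : t ≤ r) :
    ballDefect n r μ t = 0 ↔ μ ∈ krawLambda n r t := by
  have hdesc : ((n - 2 * t).descFactorial (r - t) : ℝ) ≠ 0 := by
    exact_mod_cast (Nat.descFactorial_pos.mpr (by omega)).ne'
  have hsucc : ((r - t : ℕ) : ℝ) + 1 ≠ 0 := by positivity
  rw [mem_krawLambda_iff (by omega), ballDefect, div_eq_zero_iff, mul_eq_zero]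
  simp only [hdesc, hsucc, or_false, false_or]

theorem raising_add_lowering_ballString_apply (hr : 2 * r ≤ Fintype.card α) (ht : t ≤ r)
    (hh : h ∈ harmonic ℝ α t) (hS : #S ≤ r) :
    raising ℝ α (ballString α r μ t h) S + lowering ℝ α (ballString α r μ t h) S =
      μ * ballString α r μ t h S -
        ballDefect (Fintype.card α) r μ t * (raising ℝ α ^ (r - t)) h S := by
  obtain ⟨hlevel, hker⟩ := mem_harmonic.mp hh
  have hcast : ((Fintype.card α - 2 * t : ℕ) : ℝ) = Fintype.card α - 2 * t := by
    rw [Nat.cast_sub (by omega), Nat.cast_mul, Nat.cast_ofNat]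
  have hres := krawString_residual (show r - t ≤ Fintype.card α - 2 * t by omega) hker
    (fun j => by rw [hcast, lowering_raising_pow_succ hh]) μ
  have htop : (raising ℝ α ^ (r - t + 1)) h S = 0 :=
    mem_level.mp (raising_pow_mem_level hlevel _) S (by omega)
  have hresS := congrFun hres S
  simp only [LinearMap.sub_apply, LinearMap.add_apply, algebraMap_end_apply, Pi.sub_apply,
    Pi.add_apply, Pi.smul_apply, smul_eq_mul, htop] at hresS
  rw [ballString, ballDefect]
  linear_combination hresS

variable (α) in
/-- The functions supported on the ball of radius `r` that satisfy the eigen-equation of the cube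
on all levels below `s`. -/
noncomputable def ballEigenspace (r s : ℕ) (μ : ℝ) : Submodule ℝ (Finset α → ℝ) :=
  partialEigenspace (raising ℝ α + lowering ℝ α) {S | #S ≤ r} {S | #S < s} μ

theorem mem_ballEigenspace {s : ℕ} :
    f ∈ ballEigenspace α r s μ ↔ (∀ S, r < #S → f S = 0) ∧
      ∀ S, #S < s → raising ℝ α f S + lowering ℝ α f S = μ * f S := by
  simp [ballEigenspace, mem_partialEigenspace]

theorem ballString_mem_ballEigenspace (hr : 2 * r ≤ Fintype.card α) (ht : t ≤ r)
    (hh : h ∈ harmonic ℝ α t) : ballString α r μ t h ∈ ballEigenspace α r r μ := by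
  refine mem_ballEigenspace.mpr
    ⟨fun S hS => ballString_apply_of_lt_card hh.1 ht hS, fun S hS => ?_⟩
  rw [raising_add_lowering_ballString_apply hr ht hh hS.le,
    mem_level.mp (raising_pow_mem_level hh.1 _) S (by omega), mul_zero, sub_zero]

theorem ballString_mem_ballEigenspace_succ (hr : 2 * r ≤ Fintype.card α) (ht : t ≤ r)
    (hμ : μ ∈ krawLambda (Fintype.card α) r t) (hh : h ∈ harmonic ℝ α t) :
    ballString α r μ t h ∈ ballEigenspace α r (r + 1) μ := by
  refine mem_ballEigenspace.mpr
    ⟨fun S hS => ballString_apply_of_lt_card hh.1 ht hS, fun S hS => ?_⟩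
  rw [raising_add_lowering_ballString_apply hr ht hh (Nat.lt_succ_iff.mp hS),
    (ballDefect_eq_zero_iff hr ht).mpr hμ, zero_mul, sub_zero]

theorem exists_harmonic_eq_on_level (ht : t ≤ r) (hf : f ∈ ballEigenspace α r r μ)
    (hlow : ∀ S, #S < t → f S = 0) :
    ∃ g ∈ harmonic ℝ α t, ∀ S, #S = t → g S = f S := by
  let g (S : Finset α) : ℝ := if #S = t then f S else 0
  have hlevel : g ∈ level ℝ α t := mem_level.mpr fun S hS => if_neg hS
  refine ⟨g, ?_, fun S hS => if_pos hS⟩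
  cases t with
  | zero => rwa [harmonic_zero]
  | succ t =>
    refine mem_harmonic.mpr ⟨hlevel, funext fun S => ?_⟩
    by_cases hS : #S = t
    · have hDg : lowering ℝ α g S = lowering ℝ α f S := sum_congr rfl fun i hi =>
        if_pos (by rw [card_insert_of_notMem (mem_compl.mp hi), hS])
      have hUf : raising ℝ α f S = 0 := sum_eq_zero fun i _ =>
        hlow _ ((card_erase_le).trans_lt (by omega))
      have heq := (mem_ballEigenspace.mp hf).2 S (by omega)
      rwa [hUf, zero_add, hlow S (by omega), mul_zero, ← hDg] at heq
    · exact mem_level.mp (lowering_mem_level hlevel) S hS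

theorem ballEigenspace_le_iSup_map_ballString (hr : 2 * r ≤ Fintype.card α) :
    ballEigenspace α r r μ ≤ ⨆ t ∈ range (r + 1), (harmonic ℝ α t).map (ballString α r μ t) := by
  set P := ⨆ t ∈ range (r + 1), (harmonic ℝ α t).map (ballString α r μ t)
  have hP : P ≤ ballEigenspace α r r μ := iSup₂_le fun t ht => by
    rintro _ ⟨h, hh, rfl⟩
    exact ballString_mem_ballEigenspace hr (Nat.lt_succ_iff.mp (mem_range.mp ht)) hh
  intro f hf
  have happrox : ∀ i ≤ r + 1, ∃ p ∈ P, ∀ S, #S < i → (f - p) S = 0 := by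
    intro i
    induction i with
    | zero => exact fun _ => ⟨0, P.zero_mem, fun S hS => absurd hS (Nat.not_lt_zero _)⟩
    | succ t ih =>
      intro ht
      obtain ⟨p, hp, hlow⟩ := ih (by omega)
      obtain ⟨g, hg, hgf⟩ := exists_harmonic_eq_on_level (Nat.lt_succ_iff.mp ht)
        (Submodule.sub_mem _ hf (hP hp)) hlow
      refine ⟨p + ballString α r μ t g, P.add_mem hp (Submodule.mem_iSup_of_mem t
        (Submodule.mem_iSup_of_mem (mem_range.mpr ht) ⟨g, hg, rfl⟩)), fun S hS => ?_⟩
      have hS := Nat.lt_succ_iff.mp hS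
      rw [← sub_sub, Pi.sub_apply, ballString_apply_of_card_le hg.1 hS, sub_eq_zero]
      obtain hS | hS := hS.lt_or_eq
      · rw [hlow S hS, mem_level.mp hg.1 S hS.ne]
      · exact (hgf S hS).symm
  obtain ⟨p, hp, hfp⟩ := happrox (r + 1) le_rfl
  have : f = p := funext fun S => by
    by_cases hS : #S < r + 1
    · exact sub_eq_zero.mp (hfp S hS)
    · rw [(mem_ballEigenspace.mp hf).1 S (by omega),
        (mem_ballEigenspace.mp (hP hp)).1 S (by omega)]
  rwa [this]

theorem ballDefect_smul_eq_zero {h : ℕ → Finset α → ℝ} (hr : 2 * r ≤ Fintype.card α)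
    (hh : ∀ t, h t ∈ harmonic ℝ α t)
    (hsum : ∑ t ∈ range (r + 1), ballString α r μ t (h t) ∈ ballEigenspace α r (r + 1) μ) :
    ∀ t ≤ r, ballDefect (Fintype.card α) r μ t • h t = 0 := by
  refine eq_zero_of_sum_raising_pow_eq_zero hr (fun t => Submodule.smul_mem _ _ (hh t)) ?_
  funext S
  simp only [map_smul, Finset.sum_apply, Pi.smul_apply, smul_eq_mul, Pi.zero_apply]
  by_cases hS : #S ≤ r
  · have heq := (mem_ballEigenspace.mp hsum).2 S (Nat.lt_succ_iff.mpr hS)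
    simp only [map_sum, Finset.sum_apply, mul_sum, ← sum_add_distrib] at heq
    have hdefect := sum_congr rfl fun t (ht : t ∈ range (r + 1)) =>
      raising_add_lowering_ballString_apply (μ := μ) hr (Nat.lt_succ_iff.mp (mem_range.mp ht))
        (hh t) hS
    rw [sum_sub_distrib] at hdefect
    linarith
  · refine sum_eq_zero fun t ht => ?_
    have := mem_range.mp ht
    rw [mem_level.mp (raising_pow_mem_level (hh t).1 _) S (by omega), mul_zero]

theorem ballEigenspace_eq_iSup (hr : 2 * r ≤ Fintype.card α) :
    ballEigenspace α r (r + 1) μ =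
      ⨆ t ∈ (range (r + 1)).filter (μ ∈ krawLambda (Fintype.card α) r ·),
        (harmonic ℝ α t).map (ballString α r μ t) := by
  refine le_antisymm (fun f hf => ?_) (iSup₂_le fun t ht => ?_)
  · have hf' : f ∈ ballEigenspace α r r μ := by
      rw [mem_ballEigenspace] at hf ⊢
      exact ⟨hf.1, fun S hS => hf.2 S (by omega)⟩
    obtain ⟨w, rfl⟩ := (Submodule.mem_iSup_finset_iff_exists_sum _ _).mp
      (ballEigenspace_le_iSup_map_ballString hr hf')
    choose h hh hw using fun t => (w t).2
    simp only [← hw] at hf ⊢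
    have hdefect := ballDefect_smul_eq_zero hr hh hf
    refine Submodule.sum_mem _ fun t ht => ?_
    have htr := Nat.lt_succ_iff.mp (mem_range.mp ht)
    by_cases hμ : μ ∈ krawLambda (Fintype.card α) r t
    · exact Submodule.mem_iSup_of_mem t
        (Submodule.mem_iSup_of_mem (mem_filter.mpr ⟨ht, hμ⟩) ⟨h t, hh t, rfl⟩)
    · have hne := (ballDefect_eq_zero_iff hr htr).not.mpr hμ
      rw [(smul_eq_zero.mp (hdefect t htr)).resolve_left hne, map_zero]
      exact Submodule.zero_mem _
  · rintro _ ⟨h, hh, rfl⟩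
    obtain ⟨ht, hμ⟩ := mem_filter.mp ht
    exact ballString_mem_ballEigenspace_succ hr (Nat.lt_succ_iff.mp (mem_range.mp ht)) hμ hh

theorem eq_zero_of_sum_ballString_eq_zero {T : Finset ℕ} {h : ℕ → Finset α → ℝ}
    (hh : ∀ t ∈ T, h t ∈ level ℝ α t) (hsum : ∑ t ∈ T, ballString α r μ t (h t) = 0) :
    ∀ t ∈ T, h t = 0 := by
  intro t
  induction t using Nat.strong_induction_on with
  | _ t ih =>
    intro ht
    funext S
    by_cases hS : #S = t
    · have hsumS := congrFun hsum S
      rw [Finset.sum_apply, sum_eq_single_of_mem t ht,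
        ballString_apply_of_card_le (hh t ht) hS.le] at hsumS
      · exact hsumS
      · intro s hs hst
        obtain hlt | hlt := hst.lt_or_gt
        · rw [ih s hlt hs, map_zero, Pi.zero_apply]
        · rw [ballString_apply_of_card_le (hh s hs) (by omega),
            mem_level.mp (hh s hs) S (by omega)]
    · exact mem_level.mp (hh t ht) S hS

theorem finrank_ballEigenspace (hr : 2 * r ≤ Fintype.card α) (μ : ℝ) :
    finrank ℝ (ballEigenspace α r (r + 1) μ) =
      ∑ t ∈ (range (r + 1)).filter (μ ∈ krawLambda (Fintype.card α) r ·),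
        dimV (Fintype.card α) t := by
  rw [ballEigenspace_eq_iSup hr, finrank_iSup_map]
  · exact sum_congr rfl fun t ht => finrank_harmonic (by
      have := mem_range.mp (mem_of_mem_filter t ht)
      omega)
  · exact fun h hh => eq_zero_of_sum_ballString_eq_zero fun t ht => (hh t ht).1

end Ball

section Cube

/-- The adjacency matrix of the Hamming cube, with its vertices encoded as the subsets of `α`. -/
def cubeAdj (R α : Type*) [Zero R] [One R] [DecidableEq α] :
    Matrix (Finset α) (Finset α) R :=
  Matrix.of fun S T => if #(symmDiff S T) = 1 then 1 else 0

theorem cubeAdj_mulVec_apply {R α : Type*} [CommRing R] [Fintype α] [DecidableEq α]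
    (f : Finset α → R) (S : Finset α) :
    (cubeAdj R α *ᵥ f) S = ∑ i, f (symmDiff S {i}) := by
  have hinj : Function.Injective fun i : α => symmDiff S {i} :=
    (symmDiff_right_injective S).comp singleton_injective
  refine (Fintype.sum_of_injective _ hinj _ _ (fun T hT => ?_) fun i => ?_).symm
  · have hcard : #(symmDiff S T) ≠ 1 := fun h => by
      obtain ⟨i, hi⟩ := card_eq_one.mp h
      exact hT ⟨i, by simp [← hi]⟩
    simp [cubeAdj, hcard]
  · simp [cubeAdj]

theorem toLin'_cubeAdj {R α : Type*} [CommRing R] [Fintype α] [DecidableEq α] :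
    Matrix.toLin' (cubeAdj R α) = raising R α + lowering R α := by
  refine LinearMap.ext fun f => funext fun S => ?_
  rw [Matrix.toLin'_apply, cubeAdj_mulVec_apply, ← sum_add_sum_compl S, LinearMap.add_apply,
    Pi.add_apply, raising_apply, lowering_apply]
  congr 1 <;> refine sum_congr rfl fun i hi => congrArg f (ext fun j => ?_) <;>
    by_cases hj : j = i <;> simp_all [mem_symmDiff]

/-- The set of coordinates at which a Boolean vector is `true`. -/
def trueSet {n : ℕ} (x : Fin n → Bool) : Finset (Fin n) :=
  univ.filter fun i => x i = true

theorem mem_trueSet {n : ℕ} {x : Fin n → Bool} {i : Fin n} : i ∈ trueSet x ↔ x i = true := by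
  simp [trueSet]

theorem trueSet_injective {n : ℕ} : Function.Injective (trueSet (n := n)) := fun x y h =>
  funext fun i => Bool.eq_iff_iff.mpr (by rw [← mem_trueSet, h, mem_trueSet])

theorem card_symmDiff_trueSet {n : ℕ} (x y : Fin n → Bool) :
    #(symmDiff (trueSet x) (trueSet y)) = hammingDist x y := by
  rw [hammingDist]
  congr 1
  ext i
  cases hx : x i <;> cases hy : y i <;> simp [mem_symmDiff, mem_trueSet, hx, hy]

theorem ballAdj_eq_submatrix (n r : ℕ) :
    ballAdj n r = (cubeAdj ℝ (Fin n)).submatrix (fun x => trueSet x.1) (fun x => trueSet x.1) := by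
  ext x y
  simp [ballAdj, cubeAdj, card_symmDiff_trueSet]

theorem range_trueSet_ball (n r : ℕ) :
    Set.range (fun x : {x : Fin n → Bool // wt x ≤ r} => trueSet x.1) = {S | #S ≤ r} := by
  ext S
  constructor
  · rintro ⟨x, rfl⟩
    exact x.2
  · intro hS
    have hdec : trueSet (fun i => decide (i ∈ S)) = S := by
      ext i
      simp [mem_trueSet]
    exact ⟨⟨fun i => decide (i ∈ S), (congrArg card hdec).trans_le hS⟩, hdec⟩

theorem finrank_eigenspace_ballAdj {n r : ℕ} (hr : 2 * r ≤ n) (μ : ℝ) :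
    finrank ℝ (End.eigenspace (Matrix.toLin' (ballAdj n r)) μ) =
      ∑ t ∈ (range (r + 1)).filter (fun t => μ ∈ krawLambda n r t), dimV n t := by
  have hball := finrank_ballEigenspace (α := Fin n) (by rwa [Fintype.card_fin]) μ
  have hinj : Function.Injective fun x : {x : Fin n → Bool // wt x ≤ r} => trueSet x.1 :=
    trueSet_injective.comp Subtype.val_injective
  have hset : {S : Finset (Fin n) | #S < r + 1} = {S | #S ≤ r} := Set.ext fun _ => Nat.lt_succ_iff
  rw [ballEigenspace, hset, Fintype.card_fin] at hball
  rw [ballAdj_eq_submatrix, finrank_eigenspace_submatrix _ hinj, range_trueSet_ball,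
    toLin'_cubeAdj, hball]

theorem hasEigenvalue_ballAdj_iff {n r : ℕ} (hr : 2 * r ≤ n) (μ : ℝ) :
    End.HasEigenvalue (Matrix.toLin' (ballAdj n r)) μ ↔ ∃ t ≤ r, μ ∈ krawLambda n r t := by
  have hpos (t : ℕ) (ht : t ≤ r) : dimV n t ≠ 0 := (dimV_pos (by omega)).ne'
  rw [End.HasEigenvalue, End.HasUnifEigenvalue, ← Submodule.one_le_finrank_iff,
    finrank_eigenspace_ballAdj hr, Nat.one_le_iff_ne_zero, Ne, sum_eq_zero_iff]
  simp only [mem_filter, mem_range, Nat.lt_succ_iff]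
  grind

end Cube

end HammingBall

theorem ball_spectrum (n r : ℕ) (hn : 0 < n) (hr : 2 * r ≤ n) :
    (∀ t ≤ r, ∀ μ ∈ krawLambda n r t,
        Module.End.HasEigenvalue (Matrix.toLin' (ballAdj n r)) μ) ∧
    ∀ μ : ℝ, Module.End.HasEigenvalue (Matrix.toLin' (ballAdj n r)) μ →
      (∃ t ≤ r, μ ∈ krawLambda n r t) ∧
        Module.finrank ℝ (Module.End.eigenspace (Matrix.toLin' (ballAdj n r)) μ) =
          ∑ t ∈ (Finset.range (r + 1)).filter (fun t => μ ∈ krawLambda n r t), dimV n t := by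
  have hasEigenvalue_iff := HammingBall.hasEigenvalue_ballAdj_iff hr
  exact ⟨fun t ht μ hμ => (hasEigenvalue_iff μ).mpr ⟨t, ht, hμ⟩,
    fun μ hμ => ⟨(hasEigenvalue_iff μ).mp hμ, HammingBall.finrank_eigenspace_ballAdj hr μ⟩⟩
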